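/- For all integers n ≥ 0 and t ≥ 0 and for each α ∈ {3, 4, 13, 17, 18, 24, 27, 32, 34}, B_{35}^{(35t+27)}(35n + α) ≡ 0 (mod 35). -/

import Mathlib

/-!
Let `E = ∏ (1 - q^m)` and let `b` be the generating function of `35`-regular partitions, so that
`b * E = ∏ (1 - q^(35m))` and the numbers `B 35 r n` are the coefficients of `b^r`.

Modulo a prime `p`, the power `E^p` is a series in `q^p`, so for `p ∣ 35` and `r + s ≡ 0 (mod p)` the
series `b^r` is `E^s` times an invertible series in `q^p`: it vanishes on every residue class modulo
`p` on which `E^s` does (`B_cast_eq_zero`). For `r = 35t + 27` take `s = 3` when `p = 5` and `s = 1`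
when `p = 7`.

* Modulo `7`, Euler's pentagonal number theorem shows that `E` vanishes on the classes `3, 4, 6`.
* Modulo `5`, Jacobi's identity `E^3 = ∑_{j ≥ 0} (-1)^j (2j+1) q^(j(j+1)/2)` shows that `E^3` vanishes
  on the classes `2, 3, 4`: exponents are `0, 1, 3` modulo `5`, and `3` forces `5 ∣ 2j + 1`.

Each listed `α` lies in these classes for both primes. Jacobi's identity is obtained from a finite
version (`finite_jacobi`), namely the derivative of Rothe's `q`-binomial theorem at a simple zero of
the product.
-/

/-- `B ℓ r n` is the number of `ℓ`-regular `r`-multipartitions of `n`: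
ordered `r`-tuples `(λ⁽¹⁾, …, λ⁽ʳ⁾)` of partitions, none of whose parts is
divisible by `ℓ`, whose sizes sum to `n`. -/
def B (ℓ r n : ℕ) : ℕ :=
  Fintype.card {f : Fin r → Σ a : Fin (n + 1), Nat.Partition a //
    (∑ i, ((f i).1 : ℕ)) = n ∧ ∀ i, ∀ part ∈ (f i).2.parts, ¬ ℓ ∣ part}

open PowerSeries Finset

/-! ### Generating functions -/

/-- The generating function `∏ (1 - X^(ℓm)) / (1 - X^m)` of `ℓ`-regular partitions, given by its
coefficients. -/
noncomputable def regSeries (R : Type*) [CommRing R] (ℓ : ℕ) : R⟦X⟧ :=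
  PowerSeries.mk fun n => (#(Nat.Partition.restricted n (¬ ℓ ∣ ·)) : R)

/-- An `ℓ`-regular multipartition of `n` is a choice of component sizes adding up to `n`, followed by
an independent choice of an `ℓ`-regular partition of each size. -/
def multiEquiv (ℓ r n : ℕ) :
    {f : Fin r → Σ a : Fin (n + 1), Nat.Partition a //
      (∑ i, ((f i).1 : ℕ)) = n ∧ ∀ i, ∀ part ∈ (f i).2.parts, ¬ ℓ ∣ part} ≃
    Σ g : {g : Fin r → Fin (n + 1) // ∑ i, (g i : ℕ) = n},
      ∀ i, Nat.Partition.restricted (g.1 i) (¬ ℓ ∣ ·) where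
  toFun f := ⟨⟨fun i => (f.1 i).1, f.2.1⟩, fun i => ⟨(f.1 i).2, by
    simpa [Nat.Partition.restricted] using f.2.2 i⟩⟩
  invFun g := ⟨fun i => ⟨g.1.1 i, (g.2 i).1⟩, g.1.2, fun i => by
    exact (mem_filter.1 (g.2 i).2).2⟩
  left_inv _ := rfl
  right_inv _ := rfl

theorem B_eq_coeff (R : Type*) [CommRing R] (ℓ r n : ℕ) :
    (B ℓ r n : R) = coeff n (regSeries R ℓ ^ r) := by
  have h1 : regSeries R ℓ ^ r = ∏ _i : Fin r, regSeries R ℓ := by simp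
  rw [h1, coeff_prod, B, Fintype.card_congr (multiEquiv ℓ r n), Fintype.card_sigma]
  simp only [Fintype.card_pi, Fintype.card_coe, Nat.cast_sum, Nat.cast_prod, regSeries, coeff_mk]
  have hle : ∀ l ∈ finsuppAntidiag (univ : Finset (Fin r)) n, ∀ i, l i < n + 1 := by
    intro l hl i
    rw [mem_finsuppAntidiag] at hl
    have := Finset.single_le_sum (f := fun i => l i) (fun _ _ => Nat.zero_le _) (mem_univ i)
    exact Nat.lt_succ_of_le (this.trans_eq hl.1)
  refine Finset.sum_bij'
    (fun g _ => Finsupp.equivFunOnFinite.symm fun i => (g.1 i : ℕ))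
    (fun l hl => ⟨fun i => ⟨l i, hle l hl i⟩, ?_⟩) ?_ ?_ ?_ ?_ ?_
  · simpa using (mem_finsuppAntidiag.1 hl).1
  · intro g _
    simp [mem_finsuppAntidiag, g.2]
  · intros; simp
  · intros; simp
  · intros; ext; simp
  · intros; simp

/-- The product of `regSeries` with Euler's product is `∏ (1 - X^(ℓm))`, a series in `X^ℓ`. By
Glaisher's theorem the regular partitions are counted by `∏ (1 + X^m + ⋯ + X^((ℓ-1)m))`, so the
factors multiply one by one. -/
theorem coeff_regSeries_mul_pentagonalSeries (p : ℕ) [Fact p.Prime] (ℓ : ℕ) (hℓ : 0 < ℓ) (n : ℕ) (hn : ¬ ℓ ∣ n) :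
    coeff n (regSeries (ZMod p) ℓ * pentagonalSeries (ZMod p)) = 0 := by
  open PowerSeries.WithPiTopology in
  have h := (Nat.Partition.hasProd_powerSeriesMk_card_countRestricted (ZMod p) hℓ).mul
    (hasProd_one_sub_X_pow (ZMod p))
  rw [← Nat.Partition.powerSeriesMk_card_restricted_eq_powerSeriesMk_card_countRestricted _ hℓ] at h
  rw [HasProd, PowerSeries.WithPiTopology.tendsto_iff_coeff_tendsto] at h
  refine tendsto_nhds_unique (h n) ?_
  refine tendsto_const_nhds.congr fun s => ?_
  have : (∏ b ∈ s, (∑ j ∈ range ℓ, (X : (ZMod p)⟦X⟧) ^ ((b + 1) * j)) * (1 - X ^ (b + 1))) =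
      expand ℓ hℓ.ne' (∏ b ∈ s, (1 - X ^ (b + 1))) := by
    rw [map_prod]
    refine prod_congr rfl fun b _ => ?_
    simp only [pow_mul, geom_sum_mul_neg, map_sub, map_one, map_pow, expand_X]
    ring
  rw [this, coeff_expand_of_not_dvd _ _ _ hn]

/-- Over `ZMod p`, a `p`-th power is a series in `X^p`. -/
theorem coeff_pow_char (p : ℕ) [Fact p.Prime] (f : (ZMod p)⟦X⟧) (n : ℕ) (hn : ¬ p ∣ n) :
    coeff n (f ^ p) = 0 := by
  have hp : p ≠ 0 := (Fact.out : p.Prime).ne_zero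
  have h := MvPowerSeries.map_frobenius_expand (R := ZMod p) p hp (f := f)
  rw [ZMod.frobenius_zmod] at h
  have h2 : expand p hp f = f ^ p := by
    rw [← h]
    exact (MvPowerSeries.map_id (R := ZMod p) ▸ rfl)
  rw [← h2, coeff_expand_of_not_dvd _ _ _ hn]

/-! ### Series supported on residue classes -/

section support
variable {R : Type*} [CommRing R]

/-- Multiplying by a series in `X^d` preserves vanishing of the coefficients on a residue class
modulo `d`. -/
theorem coeff_mul_residue {d c : ℕ} {H A : R⟦X⟧} (hH : ∀ n, ¬ d ∣ n → coeff n H = 0)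
    (hA : ∀ n, n % d = c → coeff n A = 0) (n : ℕ) (hn : n % d = c) : coeff n (H * A) = 0 := by
  rw [coeff_mul]
  refine sum_eq_zero fun x hx => ?_
  rw [HasAntidiagonal.mem_antidiagonal] at hx
  by_cases hd : d ∣ x.1
  · obtain ⟨k, hk⟩ := hd
    rw [hA x.2 (by rw [← hn, ← hx, hk, Nat.mul_add_mod]), mul_zero]
  · rw [hH _ hd, zero_mul]

/-- Dividing by a series in `X^d` with constant term `1` preserves vanishing of the coefficients on a
residue class modulo `d`. -/
theorem coeff_residue_of_mul {d c : ℕ} {H A : R⟦X⟧} (hH : ∀ n, ¬ d ∣ n → coeff n H = 0)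
    (hH0 : constantCoeff H = 1)
    (hA : ∀ n, n % d = c → coeff n (H * A) = 0) (n : ℕ) (hn : n % d = c) : coeff n A = 0 := by
  induction n using Nat.strong_induction_on with
  | _ n ih =>
  have h := hA n hn
  rw [coeff_mul, sum_eq_single (0, n)] at h
  · simpa [hH0] using h
  · intro x hx hne
    rw [HasAntidiagonal.mem_antidiagonal] at hx
    by_cases hd : d ∣ x.1
    · obtain ⟨k, hk⟩ := hd
      have hx1 : x.1 ≠ 0 := fun h0 => hne (Prod.ext h0 (by simp only; omega))
      rw [ih x.2 (by omega) (by rw [← hn, ← hx, hk, Nat.mul_add_mod]), mul_zero]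
    · rw [hH _ hd, zero_mul]
  · simp

theorem coeff_pow_support {d : ℕ} {H : R⟦X⟧} (hH : ∀ n, ¬ d ∣ n → coeff n H = 0) (k : ℕ) :
    ∀ n, ¬ d ∣ n → coeff n (H ^ k) = 0 := by
  induction k with
  | zero =>
    intro n hn
    rw [pow_zero, coeff_one, if_neg]
    rintro rfl
    exact hn (dvd_zero d)
  | succ k ih =>
    intro n hn
    rw [pow_succ]
    exact coeff_mul_residue (c := n % d) ih
      (fun m hm => hH m fun h => hn (Nat.dvd_of_mod_eq_zero (hm ▸ Nat.mod_eq_zero_of_dvd h))) n rfl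

end support

theorem constantCoeff_pentagonalSeries (R : Type*) [CommRing R] :
    constantCoeff (pentagonalSeries R) = 1 := by
  have := coeff_pentagonalSeries_pentagonal R 0
  simpa [pentagonal_def] using this

/-- With `E` Euler's product, `b = regSeries` and `r + s = pk`, one has
`(E^p)^k * b^r = (b * E)^r * E^s`, where `E^p` and `b * E` are series in `X^p`; hence `b^r` vanishes on
every residue class modulo `p` on which `E^s` does. -/
theorem B_cast_eq_zero (p : ℕ) [Fact p.Prime] {ℓ r s k c : ℕ} (hℓ : 0 < ℓ) (hpℓ : p ∣ ℓ)
    (hrs : r + s = p * k)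
    (hE : ∀ n, n % p = c → coeff n (pentagonalSeries (ZMod p) ^ s) = 0)
    (n : ℕ) (hn : n % p = c) : (B ℓ r n : ZMod p) = 0 := by
  rw [B_eq_coeff]
  set E := pentagonalSeries (ZMod p)
  set b := regSeries (ZMod p) ℓ
  refine coeff_residue_of_mul (H := (E ^ p) ^ k)
    (coeff_pow_support (coeff_pow_char p E) k) ?_ ?_ n hn
  · simp [E, constantCoeff_pentagonalSeries]
  · have : (E ^ p) ^ k * b ^ r = (b * E) ^ r * E ^ s := by
      rw [← pow_mul, ← hrs]; ring
    rw [this]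
    exact coeff_mul_residue
      (coeff_pow_support (fun m hm => coeff_regSeries_mul_pentagonalSeries p ℓ hℓ m fun h => hm (hpℓ.trans h)) r) hE

/-- Pentagonal numbers are congruent to `0`, `1`, `2` or `5` modulo `7`. -/
theorem coeff_pentagonalSeries_mod_seven (n : ℕ) (hn : n % 7 = 3 ∨ n % 7 = 4 ∨ n % 7 = 6) :
    coeff n (pentagonalSeries (ZMod 7) ^ 1) = 0 := by
  rw [pow_one]
  apply coeff_pentagonalSeries_eq_zero
  rintro ⟨k, rfl⟩
  have h := two_mul_natCast_pentagonal k
  generalize pentagonal k = N at *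
  have h7 : (2 * (N : ℤ)) % 7 = (k % 7 * (3 * (k % 7) - 1)) % 7 := by
    rw [h]; simp [Int.mul_emod, Int.sub_emod]
  have : k % 7 = 0 ∨ k % 7 = 1 ∨ k % 7 = 2 ∨ k % 7 = 3 ∨ k % 7 = 4 ∨ k % 7 = 5 ∨ k % 7 = 6 := by
    omega
  rcases this with h | h | h | h | h | h | h <;> rw [h] at h7 <;> omega

/-! ### Gaussian binomials -/

/-- The Gaussian binomial coefficient `[N, k]_q`, defined by the `q`-Pascal recurrence. -/
def gaussBinom {A : Type*} [CommRing A] (q : A) : ℕ → ℕ → A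
  | _, 0 => 1
  | 0, _ + 1 => 0
  | N + 1, k + 1 => gaussBinom q N k + q ^ (k + 1) * gaussBinom q N (k + 1)

/-- The `q`-Pochhammer symbol `(q; q)_k = ∏_{i=1}^{k} (1 - q^i)`. -/
def qPoch {A : Type*} [CommRing A] (q : A) (k : ℕ) : A := ∏ i ∈ range k, (1 - q ^ (i + 1))

section
variable {A A' : Type*} [CommRing A] [CommRing A']

theorem gaussBinom_zero_right (q : A) (N : ℕ) : gaussBinom q N 0 = 1 := by
  cases N <;> rfl

theorem gaussBinom_eq_zero (q : A) {N k : ℕ} (h : N < k) : gaussBinom q N k = 0 := by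
  induction N generalizing k with
  | zero => obtain ⟨k, rfl⟩ := Nat.exists_eq_add_of_lt h; simp [gaussBinom]
  | succ N ih =>
    obtain ⟨k, rfl⟩ : ∃ j, k = j + 1 := ⟨k - 1, by omega⟩
    simp [gaussBinom, ih (show N < k by omega), ih (show N < k + 1 by omega)]

theorem gaussBinom_self (q : A) (N : ℕ) : gaussBinom q N N = 1 := by
  induction N with
  | zero => rfl
  | succ N ih => simp [gaussBinom, ih, gaussBinom_eq_zero q (Nat.lt_succ_self N)]

theorem map_gaussBinom (f : A →+* A') (q : A) (N k : ℕ) :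
    f (gaussBinom q N k) = gaussBinom (f q) N k := by
  induction N generalizing k with
  | zero => cases k <;> simp [gaussBinom]
  | succ N ih => cases k <;> simp [gaussBinom, ih]

theorem qPoch_succ (q : A) (k : ℕ) : qPoch q (k + 1) = qPoch q k * (1 - q ^ (k + 1)) :=
  prod_range_succ _ _

/-- Division-free form of `[a+b, a]_q = (q)_{a+b} / ((q)_a (q)_b)`. -/
theorem gaussBinom_mul (q : A) (a b : ℕ) :
    gaussBinom q (a + b) a * (qPoch q a * qPoch q b) = qPoch q (a + b) := by
  induction a generalizing b with
  | zero => simp [gaussBinom_zero_right, qPoch]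
  | succ a iha =>
    induction b with
    | zero => simp [gaussBinom_self, qPoch]
    | succ b ihb =>
      have h1 := iha (b + 1)
      rw [show a + 1 + (b + 1) = (a + 1 + b) + 1 by ring, gaussBinom, qPoch_succ q (a + 1 + b)]
      rw [show a + (b + 1) = a + 1 + b by ring] at h1
      rw [qPoch_succ q a] at ihb ⊢
      rw [qPoch_succ q b] at h1 ⊢
      linear_combination (1 - q ^ (a + 1)) * h1 + q ^ (a + 1) * (1 - q ^ (b + 1)) * ihb

/-- Rothe's `q`-binomial theorem. The induction peels off the factor `k = 0` and replaces `x` by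
`x * q`. -/
theorem rothe (q x y : A) (N : ℕ) :
    ∏ k ∈ range N, (y + x * q ^ k) =
      ∑ k ∈ range (N + 1), gaussBinom q N k * q ^ (k.choose 2) * y ^ (N - k) * x ^ k := by
  induction N generalizing x with
  | zero => simp [gaussBinom]
  | succ N ih =>
    rw [prod_range_succ']
    have h : ∀ k, y + x * q ^ (k + 1) = y + (x * q) * q ^ k := fun k => by ring
    simp_rw [h]
    rw [ih (x * q), pow_zero, mul_one, mul_add, sum_range_succ' _ (N + 1)]
    have e1 : (∑ k ∈ range (N + 1),
        gaussBinom q N k * q ^ k.choose 2 * y ^ (N - k) * (x * q) ^ k) * y =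
        ∑ k ∈ range (N + 1), q ^ (k + 1) * gaussBinom q N (k + 1) * q ^ (k + 1).choose 2 *
          y ^ (N - k) * x ^ (k + 1) + y ^ (N + 1) := by
      rw [sum_range_succ', sum_range_succ _ N, gaussBinom_eq_zero q (Nat.lt_succ_self N), add_mul,
        sum_mul]
      simp only [gaussBinom_zero_right]
      have : ∀ k ∈ range N, gaussBinom q N (k + 1) * q ^ (k + 1).choose 2 * y ^ (N - (k + 1)) *
          (x * q) ^ (k + 1) * y = q ^ (k + 1) * gaussBinom q N (k + 1) * q ^ (k + 1).choose 2 *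
          y ^ (N - k) * x ^ (k + 1) := by
        intro k hk
        rw [mem_range] at hk
        rw [show N - k = N - (k + 1) + 1 by omega]
        ring
      rw [sum_congr rfl this]
      simp
      ring
    rw [e1, sum_mul]
    simp only [gaussBinom, Nat.reduceSubDiff]
    simp only [add_mul, sum_add_distrib]
    have e2 : ∀ k ∈ range (N + 1), gaussBinom q N k * q ^ k.choose 2 * y ^ (N - k) * (x * q) ^ k * x
        = gaussBinom q N k * q ^ (k + 1).choose 2 * y ^ (N - k) * x ^ (k + 1) := by
      intro k _
      rw [Nat.choose_succ_succ' k 1, Nat.choose_one_right]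
      ring
    rw [sum_congr rfl e2]
    simp
    ring

/-! ### A finite form of Jacobi's identity -/

theorem two_mul_choose_two (j : ℕ) : 2 * (j + 1).choose 2 = (j + 1) * j := by
  induction j with
  | zero => rfl
  | succ j ih => rw [Nat.choose_succ_succ' (j + 1) 1, Nat.choose_one_right, mul_add, ih]; ring

/-- The triangular number `j(j-1)/2` for the integer `j = k - m`. Because of truncated subtraction, at
most one of the two binomials is nonzero: the first for `j ≥ 0`, the second for `j ≤ 0`. -/
def tri (m k : ℕ) : ℕ := (k - m).choose 2 + (m + 1 - k).choose 2

theorem two_mul_tri (m k : ℕ) : 2 * (tri m k : ℤ) = ((k : ℤ) - m) * (k - m - 1) := by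
  unfold tri
  rcases lt_or_ge m k with h | h
  · obtain ⟨j, rfl⟩ := Nat.exists_eq_add_of_lt h
    rw [show m + j + 1 - m = j + 1 by omega, show m + 1 - (m + j + 1) = 0 - j by omega]
    have := two_mul_choose_two j
    zify at this
    simp [this]
    ring
  · obtain ⟨j, rfl⟩ := Nat.exists_eq_add_of_le h
    rw [show k - (k + j) = 0 by omega, show k + j + 1 - k = j + 1 by omega]
    have := two_mul_choose_two j
    zify at this
    simp [this]
    ring

theorem tri_expo (m k : ℕ) (hk : k ≤ 2 * m) :
    k.choose 2 + m * (2 * m - k) = (m.choose 2 + m * m) + tri m k := by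
  have h : ∀ k : ℕ, 2 * (k.choose 2 : ℤ) = (k : ℤ) * (k - 1) := by
    intro k
    have := two_mul_tri 0 k
    have h0 : tri 0 k = k.choose 2 := by rcases k with _ | k <;> simp [tri]
    rw [h0] at this
    simpa using this
  zify [hk]
  linarith [h k, h m, two_mul_tri m k]

theorem prod_left (q : A) (m : ℕ) :
    ∏ k ∈ range m, (q ^ m - q ^ k) = (-1) ^ m * q ^ m.choose 2 * qPoch q m := by
  have h1 : ∀ k ∈ range m, q ^ m - q ^ k = (-1) * q ^ k * (1 - q ^ (m - 1 - k + 1)) := by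
    intro k hk
    rw [mem_range] at hk
    have : q ^ m = q ^ k * q ^ (m - 1 - k + 1) := by rw [← pow_add]; congr 1; omega
    rw [this]; ring
  rw [prod_congr rfl h1, prod_mul_distrib, prod_mul_distrib,
    prod_range_reflect (fun i => 1 - q ^ (i + 1)) m, prod_pow_eq_pow_sum, sum_range_id,
    ← Nat.choose_two_right]
  simp [qPoch]

theorem prod_right (q : A) (m M : ℕ) :
    ∏ i ∈ range M, (q ^ m - q ^ (m + 1 + i)) = q ^ (m * M) * qPoch q M := by
  have h1 : ∀ k ∈ range M, q ^ m - q ^ (m + 1 + k) = q ^ m * (1 - q ^ (k + 1)) := by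
    intro k _; ring
  rw [prod_congr rfl h1, prod_mul_distrib, prod_const, card_range, ← pow_mul, qPoch]

/-- A finite form of Jacobi's identity for `∏ (1 - q^i)^3`, up to a common power of `q`. With `f(T)` the
product `∏_{k<2m} (q^m + T q^k)`, both sides compute `T f'(T) - c f(T)` at `T = -1`. There the factor
`k = m` vanishes, so `f(-1) = 0` and only one term of `f'(-1)` survives; the other side is Rothe's
expansion of `f`. As `f(-1) = 0`, the constant `c` is arbitrary. -/
theorem finite_jacobi (q c : A) (M m : ℕ) (hm : m = M + 1) :
    q ^ (m.choose 2 + m * m) * ((-1) ^ M * (qPoch q m * qPoch q M)) =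
    q ^ (m.choose 2 + m * m) * ∑ k ∈ range (2 * m + 1),
      (-1) ^ k * ((k : A) - c) * gaussBinom q (2 * m) k * q ^ tri m k := by
  have h := rothe (Polynomial.C q) (Polynomial.X : Polynomial A) (Polynomial.C q ^ m) (2 * m)
  simp only [← map_gaussBinom, ← map_pow, ← map_mul] at h
  have h0 := congrArg (Polynomial.eval (-1)) h
  have h1 := congrArg (fun f => Polynomial.eval (-1) (Polynomial.derivative f)) h
  have hs : 2 * m = m + (1 + M) := by omega
  rw [Polynomial.eval_prod, prod_eq_zero (i := m) (by rw [mem_range]; omega) (by simp)] at h0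
  nth_rewrite 1 [hs] at h1
  rw [prod_range_add, prod_range_add] at h1
  simp only [prod_range_one, Polynomial.derivative_mul, Polynomial.derivative_add,
    Polynomial.eval_add, Polynomial.eval_mul, Polynomial.eval_prod, Polynomial.derivative_C,
    Polynomial.derivative_X, Polynomial.eval_C, Polynomial.eval_X, Polynomial.eval_zero,
    Polynomial.eval_one, Polynomial.derivative_sum, Polynomial.eval_finsetSum,
    Polynomial.derivative_X_pow, Polynomial.eval_pow] at h0 h1
  have eL : ∏ k ∈ range m, (q ^ m + -1 * q ^ k) = (-1) ^ m * q ^ m.choose 2 * qPoch q m := by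
    rw [← prod_left]; exact prod_congr rfl fun _ _ => by ring
  have eR : ∏ i ∈ range M, (q ^ m + -1 * q ^ (m + (1 + i))) = q ^ (m * M) * qPoch q M := by
    rw [← prod_right]; exact prod_congr rfl fun _ _ => by ring
  rw [eL, eR] at h1
  have key : q ^ (m.choose 2 + m * m) * ∑ k ∈ range (2 * m + 1),
      (-1) ^ k * ((k : A) - c) * gaussBinom q (2 * m) k * q ^ tri m k =
      - (∑ k ∈ range (2 * m + 1), (0 * (-1) ^ k + gaussBinom q (2 * m) k * q ^ k.choose 2 *
        (q ^ m) ^ (2 * m - k) * ((k : A) * (-1) ^ (k - 1)))) - c * ∑ k ∈ range (2 * m + 1),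
        gaussBinom q (2 * m) k * q ^ k.choose 2 * (q ^ m) ^ (2 * m - k) * (-1) ^ k := by
    rw [mul_sum, mul_sum, ← sum_neg_distrib, ← sum_sub_distrib]
    refine sum_congr rfl fun k hk => ?_
    rw [mem_range] at hk
    have e := congrArg (q ^ ·) (tri_expo m k (by omega))
    simp only [pow_add _ (k.choose 2), pow_mul] at e
    rw [pow_add _ _ (tri m k)] at e
    have e3 : (k : A) * (-1) ^ k = - (k * (-1) ^ (k - 1)) := by
      rcases k with _ | k
      · simp
      · rw [pow_succ]; simp
    linear_combination (-(-1) ^ k * ((k : A) - c) * gaussBinom q (2 * m) k) * e +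
      gaussBinom q (2 * m) k * q ^ k.choose 2 * (q ^ m) ^ (2 * m - k) * e3
  rw [key, ← h0]
  rw [← h1]
  subst hm
  ring
end

theorem finite_jacobi_powerSeries (p : ℕ) [Fact p.Prime] (c : ZMod p) (M : ℕ) :
    ((-1) ^ M * (qPoch X (M + 1) * qPoch X M) : (ZMod p)⟦X⟧) =
     ∑ k ∈ range (2 * (M + 1) + 1), (-1) ^ k * ((k : (ZMod p)⟦X⟧) - C c) *
      gaussBinom X (2 * (M + 1)) k * X ^ tri (M + 1) k :=
  mul_left_cancel₀ (pow_ne_zero _ X_ne_zero) (finite_jacobi _ _ M (M + 1) rfl)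

/-! ### Jacobi's identity modulo powers of `X` -/

section limit
variable {R : Type*} [CommRing R]

theorem qPoch_sub (n d : ℕ) :
    (X : R⟦X⟧) ^ (n + 1) ∣ qPoch X (n + d) - qPoch X n := by
  induction d with
  | zero => simp
  | succ d ih =>
    rw [← add_assoc, qPoch_succ]
    have : (X : R⟦X⟧) ^ (n + 1) ∣ X ^ (n + d + 1) := pow_dvd_pow _ (by omega)
    convert! dvd_sub ih (this.mul_left (qPoch X (n + d))) using 1
    ring

theorem pentagonalSeries_sub (n : ℕ) :
    (X : R⟦X⟧) ^ (n + 1) ∣ pentagonalSeries R - qPoch X n := by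
  rw [X_pow_dvd_iff]
  intro i hi
  rw [map_sub, sub_eq_zero]
  obtain ⟨s, hs⟩ := Filter.eventually_atTop.1 (coeff_prod_one_sub_X_pow_eventually_eq R i)
  obtain ⟨N, hN⟩ := s.exists_nat_subset_range
  have h1 := hs (range (n + N)) (hN.trans (range_subset_range.2 (by omega)))
  rw [← h1]
  have h2 := X_pow_dvd_iff.1 (qPoch_sub (R := R) n N) i hi
  rw [map_sub, sub_eq_zero] at h2
  exact h2

theorem isUnit_qPoch (n : ℕ) : IsUnit (qPoch (X : R⟦X⟧) n) := by
  rw [PowerSeries.isUnit_iff_constantCoeff]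
  simp [qPoch, map_prod]

theorem lt_tri {m k j : ℕ} (h : k + j < m ∨ m + j + 1 < k) : j < tri m k := by
  have h2 := two_mul_tri m k
  zify
  rcases h with h | h <;> zify at h <;> nlinarith

end limit

/-- Jacobi's identity `E^3 = ∑ (-1)^j j X^(j(j-1)/2)` (up to sign), read off at the coefficient of `X^n`
from `finite_jacobi_powerSeries` modulo `X^(n+1)`. The weight `j` is replaced by `k - c` with `c`
arbitrary, since the terms `j` and `1 - j` have opposite signs and equal exponents. -/
theorem coeff_pentagonalSeries_cube (p : ℕ) [Fact p.Prime] (c : ZMod p) (n M : ℕ) (hM : 2 * n ≤ M) :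
    (-1) ^ M * coeff n (pentagonalSeries (ZMod p) ^ 3) =
      ∑ k ∈ range (2 * (M + 1) + 1),
        if tri (M + 1) k = n then (-1) ^ k * ((k : ZMod p) - c) else 0 := by
  set E := pentagonalSeries (ZMod p)
  let I := Ideal.span {(X : (ZMod p)⟦X⟧) ^ (n + 1)}
  let π := Ideal.Quotient.mk I
  have hπ : ∀ a b : (ZMod p)⟦X⟧, π a = π b ↔ X ^ (n + 1) ∣ a - b := fun a b => by
    rw [Ideal.Quotient.mk_eq_mk_iff_sub_mem, Ideal.mem_span_singleton]
  have hP : ∀ k, n ≤ k → π (qPoch X k) = π E := by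
    intro k hk
    obtain ⟨d, rfl⟩ := Nat.exists_eq_add_of_le hk
    rw [(hπ _ _).2 (qPoch_sub n d), (hπ _ _).2 (pentagonalSeries_sub n)]
  have hu : IsUnit (π E) := by
    rw [← hP n le_rfl]; exact (isUnit_qPoch n).map π
  -- Modulo `X^(n+1)` the Gaussian binomial is `1/E`, unless the accompanying power of `X` vanishes.
  have hG : ∀ k ∈ range (2 * (M + 1) + 1),
      π (gaussBinom X (2 * (M + 1)) k * X ^ tri (M + 1) k * E) = π (X ^ tri (M + 1) k) := by
    intro k hk
    rw [mem_range] at hk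
    by_cases ht : n < tri (M + 1) k
    · have : π (X ^ tri (M + 1) k) = 0 := by
        rw [← map_zero π, hπ, sub_zero]; exact pow_dvd_pow _ ht
      simp [map_mul, this]
    · have h1 : ¬ (k + n < M + 1 ∨ M + 1 + n + 1 < k) := fun h => ht (lt_tri h)
      have h2 := congrArg π (gaussBinom_mul (X : (ZMod p)⟦X⟧) k (2 * (M + 1) - k))
      rw [show k + (2 * (M + 1) - k) = 2 * (M + 1) by omega, map_mul, map_mul, hP _ (by omega),
        hP _ (by omega), hP _ (by omega)] at h2
      have h3 : π (gaussBinom X (2 * (M + 1)) k) * π E = 1 := by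
        apply hu.mul_right_cancel
        rw [one_mul, mul_assoc, h2]
      rw [map_mul, map_mul, mul_right_comm, h3, one_mul]
  have key : π ((-1) ^ M * E ^ 3) = π (∑ k ∈ range (2 * (M + 1) + 1),
      C ((-1) ^ k * ((k : ZMod p) - c)) * X ^ tri (M + 1) k) := by
    have h := congrArg (fun f => π (f * E)) (finite_jacobi_powerSeries p c M)
    simp only [sum_mul] at h
    rw [map_mul, map_mul, map_mul, hP _ (by omega), hP _ (by omega), map_sum] at h
    rw [map_mul, map_pow _ E, map_sum]
    convert h using 1
    · ring
    · refine sum_congr rfl fun k hk => ?_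
      rw [map_mul, ← hG k hk, ← map_mul]
      congr 1
      simp
      ring
  rw [hπ, X_pow_dvd_iff] at key
  have h := key n (Nat.lt_succ_self n)
  rw [map_sub, sub_eq_zero, map_sum] at h
  simp only [coeff_C_mul, coeff_X_pow, mul_ite, mul_one, mul_zero] at h
  have e : ((-1) ^ M : (ZMod p)⟦X⟧) = C ((-1) ^ M) := by simp
  rw [e, coeff_C_mul] at h
  rw [h]
  exact sum_congr rfl fun k _ => by simp [eq_comm]

/-- Triangular numbers `j(j-1)/2` are `0`, `1` or `3` modulo `5`, and `3` only for `j ≡ 3`; the choice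
`c = 3` in `coeff_pentagonalSeries_cube` kills these remaining terms. -/
theorem coeff_pentagonalSeries_cube_mod_five (n : ℕ) (hn : n % 5 = 2 ∨ n % 5 = 3 ∨ n % 5 = 4) :
    coeff n (pentagonalSeries (ZMod 5) ^ 3) = 0 := by
  have : Fact (Nat.Prime 5) := ⟨by norm_num⟩
  -- The centre `M + 1 = 5 * (n + 1)` is a multiple of `5`, so that `k ≡ j` modulo `5`.
  have h := coeff_pentagonalSeries_cube 5 3 n (5 * n + 4) (by omega)
  rw [sum_eq_zero] at h
  · rcases mul_eq_zero.1 h with h | h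
    · exact absurd h (pow_ne_zero _ (neg_ne_zero.2 one_ne_zero))
    · exact h
  · intro k _
    rw [ite_eq_right_iff]
    intro hk
    have h2 := two_mul_tri (5 * n + 4 + 1) k
    rw [hk] at h2
    have h5 : (2 * (n : ℤ)) % 5 = ((k : ℤ) % 5 * ((k : ℤ) % 5 - 1)) % 5 := by
      rw [h2]
      push_cast
      have : ((k : ℤ) - (5 * n + 4 + 1)) * (k - (5 * n + 4 + 1) - 1) =
        k * (k - 1) + 5 * ((n + 1) * (5 * n + 5 - 2 * k + 1)) := by ring
      rw [this, Int.add_mul_emod_self_left]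
      simp [Int.mul_emod, Int.sub_emod]
    have hk3 : k % 5 = 3 := by
      have : (k : ℤ) % 5 = 0 ∨ (k : ℤ) % 5 = 1 ∨ (k : ℤ) % 5 = 2 ∨ (k : ℤ) % 5 = 3 ∨
        (k : ℤ) % 5 = 4 := by omega
      rcases this with h | h | h | h | h <;> rw [h] at h5 <;> omega
    have : (k : ZMod 5) = (3 : ℕ) := by
      rw [ZMod.natCast_eq_natCast_iff]; exact hk3
    rw [this]
    simp

theorem stmt_15 (n t : ℕ) (α : ℕ)
    (hα : α ∈ ({3, 4, 13, 17, 18, 24, 27, 32, 34} : Finset ℕ)) :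
    B 35 (35 * t + 27) (35 * n + α) ≡ 0 [MOD 35] := by
  have : Fact (Nat.Prime 5) := ⟨by norm_num⟩
  have : Fact (Nat.Prime 7) := ⟨by norm_num⟩
  have hα5 : α % 5 = 2 ∨ α % 5 = 3 ∨ α % 5 = 4 := by revert α; decide
  have hα7 : α % 7 = 3 ∨ α % 7 = 4 ∨ α % 7 = 6 := by revert α; decide
  have h5 : ((B 35 (35 * t + 27) (35 * n + α) : ℕ) : ZMod 5) = 0 :=
    B_cast_eq_zero 5 (s := 3) (k := 7 * t + 6) (c := α % 5) (by norm_num) (by norm_num) (by ring)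
      (fun m hm => coeff_pentagonalSeries_cube_mod_five m (by omega)) _ (by omega)
  have h7 : ((B 35 (35 * t + 27) (35 * n + α) : ℕ) : ZMod 7) = 0 :=
    B_cast_eq_zero 7 (s := 1) (k := 5 * t + 4) (c := α % 7) (by norm_num) (by norm_num) (by ring)
      (fun m hm => coeff_pentagonalSeries_mod_seven m (by omega)) _ (by omega)
  rw [ZMod.natCast_eq_zero_iff] at h5 h7
  exact (Nat.modEq_zero_iff_dvd).2 ((by norm_num : Nat.Coprime 5 7).mul_dvd_of_dvd_of_dvd h5 h7)
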